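/- For every n ≥ 1, every k ≥ 1 and every partition of {1,…,n+1} into nonempty sets X, Y_1, …, Y_k, the sequence X□(Y_1|⋯|Y_k) is an ordered partition of {1,…,n}; that is, its blocks are nonempty, pairwise disjoint, and their union is {1,…,n}. -/

import Mathlib

namespace SU

/-- min of a finset of naturals (0 for the empty set). -/
def fmin (s : Finset ℕ) : ℕ := s.min.untopD 0
/-- max of a finset of naturals (0 for the empty set). -/
def fmax (s : Finset ℕ) : ℕ := s.max.unbotD 0

/-- `L` is an ordered partition of the finite set `S`. -/
def IsOrderedPartition (S : Finset ℕ) (L : List (Finset ℕ)) : Prop :=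
  (∀ B ∈ L, B ≠ ∅) ∧ List.Pairwise Disjoint L ∧ L.foldr (· ∪ ·) ∅ = S

/-- delete empty blocks. -/
def remEmpty (L : List (Finset ℕ)) : List (Finset ℕ) :=
  L.filter (fun s => decide (s ≠ ∅))

/-- `I_S(x)`: the (1-based) position of `x` in the increasing enumeration of `S`. -/
def iord (S : Finset ℕ) (x : ℕ) : ℕ := (S.filter (· ≤ x)).card

/-- `I_S⁻¹(k)`: the `k`-th smallest element of `S` (1-based). -/
def iinv (S : Finset ℕ) (k : ℕ) : ℕ := (S.sort (· ≤ ·)).getD (k - 1) 0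

/-- lower disjoint union `A ⊔̲ B` with respect to the ambient set `U`. -/
def lcup (U A B : Finset ℕ) : Finset ℕ :=
  if A = ∅ ∨ B = ∅ then A ∪ B
  else if fmin B = fmin (U \ A) then
    B.image (fun b => iord (U \ A) b + A.card - 1) ∪ Finset.Icc 1 A.card
  else B.image (fun b => iord (U \ A) b + A.card - 1)

/-- upper disjoint union `A ⊔̄ B` with respect to the ambient set `U`. -/
def ucup (U A B : Finset ℕ) : Finset ℕ :=
  if A = ∅ ∨ B = ∅ then A ∪ B
  else if fmax A = fmax (U \ B) then
    A.image (iord (U \ B)) ∪ Finset.Icc (U.card - B.card) (U.card - 1)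
  else A.image (iord (U \ B))

/-- `A □ (B_1|⋯|B_k) = (B_1|⋯|B_k) □ A`, with ambient set `U`. -/
def box (U A : Finset ℕ) (Bs : List (Finset ℕ)) : List (Finset ℕ) :=
  if fmax A = fmax U then Bs.map (fun B => ucup U B A)
  else Bs.map (fun B => lcup U A B)

/-- 2-block ordered partitions of `{1,…,n}`. -/
def IsPart2 (n : ℕ) (C D : Finset ℕ) : Prop :=
  C ≠ ∅ ∧ D ≠ ∅ ∧ Disjoint C D ∧ C ∪ D = Finset.Icc 1 n

/-- `C|D ∈ Q_{r,1}(n)`. -/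
def memQr1 (r n : ℕ) (C D : Finset ℕ) : Prop :=
  IsPart2 n C D ∧ (Finset.Icc 1 r ⊆ C ∨ Finset.Icc 1 r ⊆ D)

/-- `C|D ∈ Q_{1,s}(n)`. -/
def memQ1s (s n : ℕ) (C D : Finset ℕ) : Prop :=
  IsPart2 n C D ∧ (Finset.Icc (n - s + 1) n ⊆ C ∨ Finset.Icc (n - s + 1) n ⊆ D)

end SU
namespace SU

/-!
Write `V = U \ A`, `m = #V` and `a = #A`. The standardization `I_V` turns a partition of `V` into
a partition of `{1,…,m}`. Both disjoint unions with `A` arise by pulling this partition back along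
a monotone surjection `{1,…,m+a-1} → {1,…,m}`: for `A ⊔̲ B` the one contracting `{1,…,a}` to `1`,
for `B ⊔̄ A` the one contracting `{m,…,m+a-1}` to `m`. The whole contracted interval thus joins
the block containing `min V`, respectively `max V`, and preimages of a partition under a surjection
form a partition.
-/

section OrderedPartition

variable {S T U X : Finset ℕ} {L Ys : List (Finset ℕ)}

theorem mem_foldr_union {α : Type*} [DecidableEq α] {L : List (Finset α)} {x : α} :
    x ∈ L.foldr (· ∪ ·) ∅ ↔ ∃ B ∈ L, x ∈ B := by
  induction L with
  | nil => simp
  | cons B L ih => simp [ih]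

theorem isOrderedPartition_iff :
    IsOrderedPartition S L ↔
      (∀ B ∈ L, B.Nonempty) ∧ L.Pairwise Disjoint ∧ ∀ x, x ∈ S ↔ ∃ B ∈ L, x ∈ B := by
  simp only [IsOrderedPartition, Finset.nonempty_iff_ne_empty, Finset.ext_iff (s₂ := S),
    mem_foldr_union, iff_comm]

namespace IsOrderedPartition

theorem nonempty_of_mem (h : IsOrderedPartition S L) {B : Finset ℕ} (hB : B ∈ L) : B.Nonempty :=
  (isOrderedPartition_iff.1 h).1 B hB

theorem mem_iff (h : IsOrderedPartition S L) {x : ℕ} : x ∈ S ↔ ∃ B ∈ L, x ∈ B :=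
  (isOrderedPartition_iff.1 h).2.2 x

theorem subset_of_mem (h : IsOrderedPartition S L) {B : Finset ℕ} (hB : B ∈ L) : B ⊆ S :=
  fun _ hx ↦ h.mem_iff.2 ⟨B, hB, hx⟩

theorem tail (h : IsOrderedPartition U (X :: Ys)) : IsOrderedPartition (U \ X) Ys := by
  obtain ⟨hne, hdisj, hmem⟩ := isOrderedPartition_iff.1 h
  obtain ⟨hX, hYs⟩ := List.pairwise_cons.1 hdisj
  refine isOrderedPartition_iff.2 ⟨fun B hB ↦ hne B (List.mem_cons_of_mem X hB), hYs, fun x ↦ ?_⟩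
  simp only [Finset.mem_sdiff, hmem, List.exists_mem_cons_iff]
  constructor
  · rintro ⟨hx | hx, hxX⟩
    exacts [absurd hx hxX, hx]
  · rintro ⟨B, hB, hx⟩
    exact ⟨.inr ⟨B, hB, hx⟩, Finset.disjoint_right.1 (hX B hB) hx⟩

theorem nonempty_sdiff (h : IsOrderedPartition U (X :: Ys)) (hYs : Ys ≠ []) :
    (U \ X).Nonempty :=
  have ⟨_, hB⟩ := List.exists_mem_of_ne_nil Ys hYs
  (h.tail.nonempty_of_mem hB).mono (h.tail.subset_of_mem hB)

theorem map_image (h : IsOrderedPartition S L) {f : ℕ → ℕ} (hf : Set.InjOn f S) :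
    IsOrderedPartition (S.image f) (L.map (Finset.image f)) := by
  refine isOrderedPartition_iff.2 ⟨?_, ?_, fun y ↦ ?_⟩
  · simpa using fun B hB ↦ h.nonempty_of_mem hB
  · refine List.pairwise_map.2 (h.2.1.imp_of_mem fun {A B} hA hB hAB ↦ ?_)
    simp only [← Finset.disjoint_coe, Finset.coe_image] at hAB ⊢
    exact hAB.image hf (h.subset_of_mem hA) (h.subset_of_mem hB)
  · rw [Finset.mem_image]
    constructor
    · rintro ⟨x, hx, rfl⟩
      obtain ⟨B, hB, hxB⟩ := h.mem_iff.1 hx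
      exact ⟨B.image f, List.mem_map_of_mem hB, Finset.mem_image_of_mem f hxB⟩
    · intro ⟨_, hC, hy⟩
      obtain ⟨B, hB, rfl⟩ := List.mem_map.1 hC
      obtain ⟨x, hxB, rfl⟩ := Finset.mem_image.1 hy
      exact ⟨x, h.subset_of_mem hB hxB, rfl⟩

theorem map_preimage (h : IsOrderedPartition S L) {f : ℕ → ℕ} (hf : T.image f = S) :
    IsOrderedPartition T (L.map fun B ↦ {x ∈ T | f x ∈ B}) := by
  refine isOrderedPartition_iff.2 ⟨?_, ?_, fun x ↦ ?_⟩
  · refine List.forall_mem_map.2 fun B hB ↦ ?_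
    obtain ⟨y, hy⟩ := h.nonempty_of_mem hB
    obtain ⟨x, hx, rfl⟩ := Finset.mem_image.1 (hf ▸ h.subset_of_mem hB hy)
    exact ⟨x, Finset.mem_filter.2 ⟨hx, hy⟩⟩
  · exact List.pairwise_map.2 (h.2.1.imp fun hAB ↦
      Finset.disjoint_filter.2 fun _ _ hA hB ↦ Finset.disjoint_left.1 hAB hA hB)
  · constructor
    · intro hx
      obtain ⟨B, hB, hfx⟩ := h.mem_iff.1 (hf ▸ Finset.mem_image_of_mem f hx)
      exact ⟨_, List.mem_map_of_mem hB, Finset.mem_filter.2 ⟨hx, hfx⟩⟩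
    · intro ⟨_, hC, hx⟩
      obtain ⟨B, -, rfl⟩ := List.mem_map.1 hC
      exact (Finset.mem_filter.1 hx).1

end IsOrderedPartition

end OrderedPartition

section Extrema

variable {s t : Finset ℕ}

theorem isLeast_fmin (hs : s.Nonempty) : IsLeast (s : Set ℕ) (fmin s) := by
  rw [fmin, ← Finset.coe_min' hs]
  exact s.isLeast_min' hs

theorem isGreatest_fmax (hs : s.Nonempty) : IsGreatest (s : Set ℕ) (fmax s) := by
  rw [fmax, ← Finset.coe_max' hs]
  exact s.isGreatest_max' hs

theorem fmin_eq_fmin_iff_mem (hs : s.Nonempty) (hst : s ⊆ t) : fmin s = fmin t ↔ fmin t ∈ s :=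
  ⟨fun h ↦ h ▸ (isLeast_fmin hs).1, fun h ↦ (isLeast_fmin hs).unique
    ⟨h, fun _ hx ↦ (isLeast_fmin (hs.mono hst)).2 (hst hx)⟩⟩

theorem fmax_eq_fmax_iff_mem (hs : s.Nonempty) (hst : s ⊆ t) : fmax s = fmax t ↔ fmax t ∈ s :=
  ⟨fun h ↦ h ▸ (isGreatest_fmax hs).1, fun h ↦ (isGreatest_fmax hs).unique
    ⟨h, fun _ hx ↦ (isGreatest_fmax (hs.mono hst)).2 (hst hx)⟩⟩

end Extrema

section Standardization

variable {B V : Finset ℕ} {L : List (Finset ℕ)}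

theorem strictMonoOn_iord (V : Finset ℕ) : StrictMonoOn (iord V) V := by
  intro a _ b hb hab
  refine Finset.card_lt_card (Finset.ssubset_iff_of_subset ?_ |>.2 ⟨b, ?_, ?_⟩)
  · exact Finset.monotone_filter_right V fun _ _ hx ↦ hx.trans hab.le
  · exact Finset.mem_filter.2 ⟨hb, le_rfl⟩
  · exact fun h ↦ hab.not_ge (Finset.mem_filter.1 h).2

theorem image_iord_self (V : Finset ℕ) : V.image (iord V) = Finset.Icc 1 V.card := by
  refine Finset.eq_of_subset_of_card_le (Finset.image_subset_iff.2 fun v hv ↦ ?_) ?_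
  · exact Finset.mem_Icc.2 ⟨Finset.card_pos.2 ⟨v, Finset.mem_filter.2 ⟨hv, le_rfl⟩⟩,
      Finset.card_filter_le V _⟩
  · rw [Finset.card_image_of_injOn (strictMonoOn_iord V).injOn, Nat.card_Icc, Nat.add_sub_cancel]

theorem image_iord_subset_Icc (hBV : B ⊆ V) : B.image (iord V) ⊆ Finset.Icc 1 V.card :=
  image_iord_self V ▸ Finset.image_subset_image hBV

theorem IsOrderedPartition.map_image_iord (h : IsOrderedPartition V L) :
    IsOrderedPartition (Finset.Icc 1 V.card) (L.map (Finset.image (iord V))) :=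
  image_iord_self V ▸ h.map_image (strictMonoOn_iord V).injOn

theorem iord_mem_image_iord_iff {v : ℕ} (hv : v ∈ V) (hBV : B ⊆ V) :
    iord V v ∈ B.image (iord V) ↔ v ∈ B := by
  simpa using (strictMonoOn_iord V).injOn.mem_image_iff (Finset.coe_subset.2 hBV) hv

theorem iord_fmin (hV : V.Nonempty) : iord V (fmin V) = 1 := by
  obtain ⟨hmem, hle⟩ := isLeast_fmin hV
  refine Finset.card_eq_one.2 ⟨fmin V, Finset.ext fun x ↦ ?_⟩
  rw [Finset.mem_filter, Finset.mem_singleton]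
  exact ⟨fun hx ↦ hx.2.antisymm (hle hx.1), by rintro rfl; exact ⟨hmem, le_rfl⟩⟩

theorem iord_fmax (hV : V.Nonempty) : iord V (fmax V) = V.card :=
  congrArg Finset.card (Finset.filter_true_of_mem fun _ hx ↦ (isGreatest_fmax hV).2 hx)

theorem one_mem_image_iord_iff (hB : B.Nonempty) (hBV : B ⊆ V) :
    1 ∈ B.image (iord V) ↔ fmin B = fmin V := by
  have hV := hB.mono hBV
  rw [← iord_fmin hV, iord_mem_image_iord_iff (isLeast_fmin hV).1 hBV, fmin_eq_fmin_iff_mem hB hBV]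

theorem card_mem_image_iord_iff (hB : B.Nonempty) (hBV : B ⊆ V) :
    V.card ∈ B.image (iord V) ↔ fmax B = fmax V := by
  have hV := hB.mono hBV
  rw [← iord_fmax hV, iord_mem_image_iord_iff (isGreatest_fmax hV).1 hBV,
    fmax_eq_fmax_iff_mem hB hBV]

end Standardization

section Collapse

variable {a m N : ℕ} {J : Finset ℕ}

/-- The monotone surjection `{1,…,m+a-1} → {1,…,m}` that contracts `{1,…,a}` to `1` and translates
the remaining points, used to describe `⊔̲`. For `x < a` the truncated subtraction gives `0`, so the
maximum is what sends these points to `1`. -/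
def lowerCollapse (a x : ℕ) : ℕ := max 1 (x + 1 - a)

/-- The monotone surjection `{1,…,N} → {1,…,m}` that contracts `{m,…,N}` to `m` and fixes the
remaining points, used to describe `⊔̄`. -/
def upperCollapse (m x : ℕ) : ℕ := min x m

theorem image_lowerCollapse_Icc (ha : 1 ≤ a) (hm : 1 ≤ m) (hN : m + a = N + 1) :
    (Finset.Icc 1 N).image (lowerCollapse a) = Finset.Icc 1 m := by
  ext y
  simp only [Finset.mem_image, Finset.mem_Icc, lowerCollapse]
  constructor
  · rintro ⟨x, hx, rfl⟩
    omega
  · intro hy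
    exact ⟨y + a - 1, by omega, by omega⟩

theorem image_upperCollapse_Icc (hm : 1 ≤ m) (hN : m ≤ N) :
    (Finset.Icc 1 N).image (upperCollapse m) = Finset.Icc 1 m := by
  ext y
  simp only [Finset.mem_image, Finset.mem_Icc, upperCollapse]
  constructor
  · rintro ⟨x, hx, rfl⟩
    omega
  · intro hy
    exact ⟨y, by omega, by omega⟩

theorem filter_lowerCollapse_mem (ha : 1 ≤ a) (hN : m + a = N + 1) (hJ : J ⊆ Finset.Icc 1 m) :
    {x ∈ Finset.Icc 1 N | lowerCollapse a x ∈ J} =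
      J.image (fun j ↦ j + a - 1) ∪ if 1 ∈ J then Finset.Icc 1 a else ∅ := by
  ext x
  have hbounds : ∀ j ∈ J, 1 ≤ j ∧ j ≤ m := fun j hj ↦ Finset.mem_Icc.1 (hJ hj)
  have hshift : x ∈ J.image (fun j ↦ j + a - 1) ↔ a ≤ x ∧ x + 1 - a ∈ J := by
    rw [Finset.mem_image]
    constructor
    · rintro ⟨j, hj, rfl⟩
      have := hbounds j hj
      exact ⟨by omega, by rwa [show j + a - 1 + 1 - a = j by omega]⟩
    · exact fun ⟨_, hxJ⟩ ↦ ⟨x + 1 - a, hxJ, by omega⟩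
  have hcollapse : lowerCollapse a x = if x ≤ a then 1 else x + 1 - a := by
    grind [lowerCollapse]
  rw [Finset.mem_filter, Finset.mem_union, hshift, hcollapse]
  grind

theorem filter_upperCollapse_mem (hN : m ≤ N) (hJ : J ⊆ Finset.Icc 1 m) :
    {x ∈ Finset.Icc 1 N | upperCollapse m x ∈ J} =
      J ∪ if m ∈ J then Finset.Icc m N else ∅ := by
  ext x
  have hbounds : ∀ j ∈ J, 1 ≤ j ∧ j ≤ m := fun j hj ↦ Finset.mem_Icc.1 (hJ hj)
  have hcollapse : upperCollapse m x = if m ≤ x then m else x := by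
    grind [upperCollapse]
  rw [Finset.mem_filter, Finset.mem_union, hcollapse]
  grind

end Collapse

section DisjointUnion

variable {A B U X : Finset ℕ} {Ys : List (Finset ℕ)}

theorem lcup_eq_filter (hA : A.Nonempty) (hAU : A ⊆ U) (hB : B.Nonempty) (hBU : B ⊆ U \ A) :
    lcup U A B =
      {x ∈ Finset.Icc 1 (U.card - 1) | lowerCollapse A.card x ∈ B.image (iord (U \ A))} := by
  have hcard := Finset.card_sdiff_add_card_eq_card hAU
  have ha : 1 ≤ A.card := hA.card_pos
  rw [filter_lowerCollapse_mem ha (by omega) (image_iord_subset_Icc hBU), Finset.image_image]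
  simp only [lcup, hA.ne_empty, hB.ne_empty, or_self, if_false, one_mem_image_iord_iff hB hBU]
  split_ifs
  · rfl
  · exact (Finset.union_empty _).symm

theorem ucup_eq_filter (hA : A.Nonempty) (hAU : A ⊆ U) (hB : B.Nonempty) (hBU : B ⊆ U \ A) :
    ucup U B A =
      {x ∈ Finset.Icc 1 (U.card - 1) | upperCollapse (U \ A).card x ∈ B.image (iord (U \ A))} := by
  have hcard := Finset.card_sdiff_add_card_eq_card hAU
  have ha : 1 ≤ A.card := hA.card_pos
  rw [filter_upperCollapse_mem (by omega) (image_iord_subset_Icc hBU)]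
  simp only [ucup, hA.ne_empty, hB.ne_empty, or_self, if_false, card_mem_image_iord_iff hB hBU,
    ← Finset.card_sdiff_of_subset hAU]
  split_ifs
  · rfl
  · exact (Finset.union_empty _).symm

namespace IsOrderedPartition

theorem map_lcup (h : IsOrderedPartition U (X :: Ys)) (hYs : Ys ≠ []) :
    IsOrderedPartition (Finset.Icc 1 (U.card - 1)) (Ys.map (lcup U X)) := by
  have hX := h.nonempty_of_mem List.mem_cons_self
  have hXU := h.subset_of_mem List.mem_cons_self
  have hcard := Finset.card_sdiff_add_card_eq_card hXU
  have hV : 1 ≤ (U \ X).card := (h.nonempty_sdiff hYs).card_pos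
  have hsurj := image_lowerCollapse_Icc hX.card_pos hV (N := U.card - 1) (by omega)
  convert h.tail.map_image_iord.map_preimage hsurj using 1
  rw [List.map_map]
  exact List.map_congr_left fun B hB ↦
    lcup_eq_filter hX hXU (h.tail.nonempty_of_mem hB) (h.tail.subset_of_mem hB)

theorem map_ucup (h : IsOrderedPartition U (X :: Ys)) (hYs : Ys ≠ []) :
    IsOrderedPartition (Finset.Icc 1 (U.card - 1)) (Ys.map (ucup U · X)) := by
  have hX := h.nonempty_of_mem List.mem_cons_self
  have hXU := h.subset_of_mem List.mem_cons_self
  have hcard := Finset.card_sdiff_add_card_eq_card hXU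
  have hV : 1 ≤ (U \ X).card := (h.nonempty_sdiff hYs).card_pos
  have hsurj := image_upperCollapse_Icc hV (N := U.card - 1) (by have := hX.card_pos; omega)
  convert h.tail.map_image_iord.map_preimage hsurj using 1
  rw [List.map_map]
  exact List.map_congr_left fun B hB ↦
    ucup_eq_filter hX hXU (h.tail.nonempty_of_mem hB) (h.tail.subset_of_mem hB)

end IsOrderedPartition

end DisjointUnion

theorem statement17_general {U X : Finset ℕ} {Ys : List (Finset ℕ)} (hYs : Ys ≠ [])
    (h : IsOrderedPartition U (X :: Ys)) :
    IsOrderedPartition (Finset.Icc 1 (U.card - 1)) (box U X Ys) := by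
  unfold box
  split_ifs
  · exact h.map_ucup hYs
  · exact h.map_lcup hYs

/-- For every partition of `{1,…,n+1}` into nonempty sets
`X, Y_1, …, Y_k`, the sequence `X □ (Y_1|⋯|Y_k)` is an ordered partition of
`{1,…,n}`. -/
theorem statement17 (n k : ℕ) (hn : 1 ≤ n) (hk : 1 ≤ k)
    (X : Finset ℕ) (Ys : List (Finset ℕ)) (hlen : Ys.length = k)
    (hpart : IsOrderedPartition (Finset.Icc 1 (n+1)) (X :: Ys)) :
    IsOrderedPartition (Finset.Icc 1 n) (box (Finset.Icc 1 (n+1)) X Ys) := by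
  have hYs : Ys ≠ [] := List.ne_nil_of_length_pos (by omega)
  simpa using statement17_general hYs hpart

end SU
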